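/- (Mixed difference-differential equation for family VI with (p,q,m) = (0,0,1).) Let λ, μ ∈ ℂ and for n ∈ ℕ set F_n(x) = ₀F₂(—; λ+n, 1−μ−n; x) = Σ_{k≥0} x^k/((λ+n)_k·(1−μ−n)_k·k!) ∈ ℂ[[x]]. Assume that for every n ∈ ℕ neither λ+n nor 1−μ−n is a nonpositive integer (so each F_n is well defined), and that for every integer n ≥ 1 the quantities n+λ, n+μ−1 and (2n+λ+μ)(2n+λ+μ−1)(2n+λ+μ−2) are nonzero. Then for every integer n ≥ 1, the identity −F_n'(x) = ((n+μ)/((n+λ)(2n+λ+μ)(2n+λ+μ−1)))·F_{n+1}(x) + (2/((2n+λ+μ)(2n+λ+μ−2)))·F_n(x) + ((n+λ−1)/((n+μ−1)(2n+λ+μ−1)(2n+λ+μ−2)))·F_{n−1}(x) holds in ℂ[[x]], where ' denotes the formal derivative with respect to x. -/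

import Mathlib

noncomputable section

open PowerSeries

/-- Pochhammer symbol `(a)_k = a (a+1) ⋯ (a+k-1)`, with `(a)_0 = 1`. -/
def poch (a : ℂ) : ℕ → ℂ
  | 0 => 1
  | k + 1 => poch a k * (a + k)

/-- `F_n(x) = ₀F₂(—; λ+n, 1−μ−n; x) = Σ_{k≥0} x^k/((λ+n)_k (1−μ−n)_k k!)`. -/
def Fser (lam mu : ℂ) (n : ℕ) : PowerSeries ℂ :=
  PowerSeries.mk fun k =>
    1 / (poch (lam + n) k * poch (1 - mu - n) k * (Nat.factorial k : ℂ))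

/-!
Write `F(a, b)` for `₀F₂(—; a, b; x)`, so that `F_n = F(a, b)` and `F_{n±1} = F(a ± 1, b ∓ 1)` with
`a = λ + n`, `b = 1 - μ - n`. Comparing coefficients gives `F(a, b)' = F(a + 1, b + 1) / (a b)` and
the contiguous relation `(a - b) F(a + 1, b + 1) = a F(a, b + 1) - b F(a + 1, b)`. This relation
splits `F(a, b)'` into multiples of `F(a, b + 1)` and `F(a + 1, b)`; applied again at `(a - 1, b)`
and at `(a, b - 1)`, it expresses these two through `F_{n-1}`, `F_n` and `F_{n+1}`.
-/

lemma add_one_add_natCast_ne_zero {R : Type*} [AddMonoidWithOne R] {a : R}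
    (ha : ∀ j : ℕ, a + j ≠ 0) (j : ℕ) : a + 1 + j ≠ 0 := by
  simpa [add_assoc] using ha (1 + j)

lemma mul_eval_ascPochhammer_add_one {R : Type*} [CommSemiring R] (a : R) (k : ℕ) :
    a * (ascPochhammer R k).eval (a + 1) = (ascPochhammer R (k + 1)).eval a := by
  simp [ascPochhammer_succ_left, Polynomial.eval_comp]

lemma eval_ascPochhammer_ne_zero {R : Type*} [CommRing R] [IsDomain R] {a : R}
    (ha : ∀ j : ℕ, a + j ≠ 0) (k : ℕ) : (ascPochhammer R k).eval a ≠ 0 := by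
  rw [Ne, ascPochhammer_eval_eq_zero_iff]
  rintro ⟨j, -, hj⟩
  exact ha j (by rw [hj, add_neg_cancel])

section ZeroFTwo

variable {K : Type*} [Field K]

lemma mul_inv_eval_ascPochhammer {a : K} (ha : ∀ j : ℕ, a + j ≠ 0) (k : ℕ) :
    a * ((ascPochhammer K k).eval a)⁻¹ = (a + k) * ((ascPochhammer K k).eval (a + 1))⁻¹ := by
  have hshift : a * (ascPochhammer K k).eval (a + 1) = (a + k) * (ascPochhammer K k).eval a := by
    rw [mul_eval_ascPochhammer_add_one, ascPochhammer_succ_eval, mul_comm]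
  have ha_eval := eval_ascPochhammer_ne_zero ha k
  have ha_eval_succ := eval_ascPochhammer_ne_zero (add_one_add_natCast_ne_zero ha) k
  rwa [← div_eq_mul_inv, ← div_eq_mul_inv, div_eq_div_iff ha_eval ha_eval_succ]

/-- The hypergeometric series `₀F₂(—; a, b; x)` over a field, as a formal power series. If `a` or
`b` is a nonpositive integer, the coefficients with a vanishing denominator are `0`. -/
def zeroFTwo (a b : K) : K⟦X⟧ :=
  PowerSeries.mk fun k ↦
    ((ascPochhammer K k).eval a)⁻¹ * ((ascPochhammer K k).eval b)⁻¹ * (k.factorial : K)⁻¹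

@[simp]
lemma coeff_zeroFTwo (a b : K) (k : ℕ) :
    coeff k (zeroFTwo a b) =
      ((ascPochhammer K k).eval a)⁻¹ * ((ascPochhammer K k).eval b)⁻¹ * (k.factorial : K)⁻¹ :=
  coeff_mk k _

lemma derivative_zeroFTwo [CharZero K] (a b : K) :
    d⁄dX K (zeroFTwo a b) = (a * b)⁻¹ • zeroFTwo (a + 1) (b + 1) := by
  ext k
  have hk : (k + 1 : K) ≠ 0 := k.cast_add_one_ne_zero
  simp only [coeff_derivative, coeff_smul, coeff_zeroFTwo, ← mul_eval_ascPochhammer_add_one,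
    Nat.factorial_succ, Nat.cast_mul, Nat.cast_succ, smul_eq_mul]
  field_simp

lemma sub_smul_zeroFTwo_add_one_add_one {a b : K} (ha : ∀ j : ℕ, a + j ≠ 0)
    (hb : ∀ j : ℕ, b + j ≠ 0) :
    (a - b) • zeroFTwo (a + 1) (b + 1) =
      a • zeroFTwo a (b + 1) - b • zeroFTwo (a + 1) b := by
  ext k
  simp only [map_sub, coeff_smul, coeff_zeroFTwo, smul_eq_mul]
  linear_combination
    -((ascPochhammer K k).eval (b + 1))⁻¹ * (k.factorial : K)⁻¹ * mul_inv_eval_ascPochhammer ha k +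
      ((ascPochhammer K k).eval (a + 1))⁻¹ * (k.factorial : K)⁻¹ * mul_inv_eval_ascPochhammer hb k

/-- The index `n` is absorbed into the parameters: `lam` and `mu` stand for `λ + n` and `μ + n`. -/
theorem mixed_relation_family_VI_general [CharZero K] {lam mu : K}
    (hlam : ∀ j : ℕ, lam - 1 + j ≠ 0) (hmu : ∀ j : ℕ, 1 - mu - 1 + j ≠ 0)
    (h₀ : lam + mu ≠ 0) (h₁ : lam + mu - 1 ≠ 0) (h₂ : lam + mu - 2 ≠ 0) :
    -d⁄dX K (zeroFTwo lam (1 - mu)) =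
      (mu / (lam * (lam + mu) * (lam + mu - 1))) • zeroFTwo (lam + 1) (1 - mu - 1) +
        (2 / ((lam + mu) * (lam + mu - 2))) • zeroFTwo lam (1 - mu) +
        ((lam - 1) / ((mu - 1) * (lam + mu - 1) * (lam + mu - 2))) •
          zeroFTwo (lam - 1) (1 - mu + 1) := by
  have hlam_add : ∀ j : ℕ, lam + j ≠ 0 := by
    simpa only [sub_add_cancel] using add_one_add_natCast_ne_zero hlam
  have hmu_add : ∀ j : ℕ, 1 - mu + j ≠ 0 := by
    simpa only [sub_add_cancel] using add_one_add_natCast_ne_zero hmu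
  have hcorner : zeroFTwo (lam + 1) (1 - mu + 1) = (lam + mu - 1)⁻¹ •
      (lam • zeroFTwo lam (1 - mu + 1) - (1 - mu) • zeroFTwo (lam + 1) (1 - mu)) := by
    rw [eq_inv_smul_iff₀ h₁, ← sub_smul_zeroFTwo_add_one_add_one hlam_add hmu_add]
    module
  have hlower : zeroFTwo lam (1 - mu + 1) = (lam + mu - 2)⁻¹ •
      ((lam - 1) • zeroFTwo (lam - 1) (1 - mu + 1) - (1 - mu) • zeroFTwo lam (1 - mu)) := by
    have h := sub_smul_zeroFTwo_add_one_add_one hlam hmu_add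
    rw [sub_add_cancel] at h
    rw [eq_inv_smul_iff₀ h₂, ← h]
    module
  have hupper : zeroFTwo (lam + 1) (1 - mu) = (lam + mu)⁻¹ •
      (lam • zeroFTwo lam (1 - mu) + mu • zeroFTwo (lam + 1) (1 - mu - 1)) := by
    have h := sub_smul_zeroFTwo_add_one_add_one hlam_add hmu
    rw [sub_add_cancel] at h
    rw [eq_inv_smul_iff₀ h₀]
    linear_combination (norm := module) h
  have hlam₀ : lam ≠ 0 := by simpa using hlam_add 0
  have hmu₀ : 1 - mu ≠ 0 := by simpa using hmu_add 0
  have hmu_sub : mu - 1 ≠ 0 := sub_ne_zero.mpr (sub_ne_zero.mp hmu₀).symm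
  rw [derivative_zeroFTwo, hcorner, hlower, hupper]
  match_scalars <;> field_simp <;> ring

end ZeroFTwo

lemma poch_eq_eval_ascPochhammer (a : ℂ) (k : ℕ) : poch a k = (ascPochhammer ℂ k).eval a := by
  induction k with
  | zero => simp [poch]
  | succ k ih => rw [poch, ih, ascPochhammer_succ_eval]

lemma Fser_eq_zeroFTwo (lam mu : ℂ) (n : ℕ) :
    Fser lam mu n = zeroFTwo (lam + n) (1 - mu - n) := by
  ext k
  simp only [Fser, coeff_mk, coeff_zeroFTwo, poch_eq_eval_ascPochhammer, one_div, mul_inv]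

/-- Mixed difference-differential equation for family VI with `(p,q,m) = (0,0,1)`. -/
theorem mixed_relation_family_VI (lam mu : ℂ)
    (hlow : ∀ n : ℕ, ∀ j : ℕ, (lam + n) + (j : ℂ) ≠ 0 ∧ (1 - mu - n) + (j : ℂ) ≠ 0)
    (hden : ∀ n : ℕ, 1 ≤ n →
      ((n : ℂ) + lam ≠ 0) ∧ ((n : ℂ) + mu - 1 ≠ 0) ∧
      (2 * (n : ℂ) + lam + mu) * (2 * (n : ℂ) + lam + mu - 1) *
        (2 * (n : ℂ) + lam + mu - 2) ≠ 0) :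
    ∀ n : ℕ, 1 ≤ n →
      -(PowerSeries.derivativeFun (Fser lam mu n)) =
        ((((n : ℂ) + mu)) /
            (((n : ℂ) + lam) * (2 * (n : ℂ) + lam + mu) * (2 * (n : ℂ) + lam + mu - 1))) •
            Fser lam mu (n + 1) +
          ((2 : ℂ) /
            ((2 * (n : ℂ) + lam + mu) * (2 * (n : ℂ) + lam + mu - 2))) •
            Fser lam mu n +
          ((((n : ℂ) + lam - 1)) /
            (((n : ℂ) + mu - 1) * (2 * (n : ℂ) + lam + mu - 1) * (2 * (n : ℂ) + lam + mu - 2))) •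
            Fser lam mu (n - 1) := by
  intro n hn
  obtain ⟨m, rfl⟩ := Nat.exists_eq_add_of_le' hn
  obtain ⟨⟨h₀, h₁⟩, h₂⟩ := by simpa only [mul_ne_zero_iff] using (hden (m + 1) hn).2.2
  have hsum : lam + ↑(m + 1) + (mu + ↑(m + 1)) = 2 * ↑(m + 1) + lam + mu := by ring
  have h := mixed_relation_family_VI_general (lam := lam + ↑(m + 1)) (mu := mu + ↑(m + 1))
    (fun j ↦ by convert (hlow m j).1 using 1; push_cast; ring)
    (fun j ↦ by convert (hlow (m + 2) j).2 using 1; push_cast; ring)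
    (by rwa [hsum]) (by rwa [hsum]) (by rwa [hsum])
  rw [hsum, ← sub_sub] at h
  simp only [Fser_eq_zeroFTwo]
  change -d⁄dX ℂ _ = _
  convert h using 5 <;> push_cast <;> ring
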